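/- Let A, C, E, B, D, F be six points forming a convex hexagon with vertices in the cyclic order A, C, E, B, D, F (consecutive vertices are allowed to be collinear). Suppose the distance AB equals the maximum distance between any two of the six points, the unordered triples {A,B,C}, {A,B,D}, {A,B,E}, {A,B,F} are pairwise congruent, and the six points span at most 3 distinct triangles. Then the hexagon ACEBDF is a regular hexagon. -/

import Mathlib

open Real EuclideanGeometry

noncomputable section

/-- The Euclidean plane. -/
abbrev Plane : Type := EuclideanSpace ℝ (Fin 2)

/-- A point of the plane from coordinates. -/
def pt (x y : ℝ) : Plane := (WithLp.equiv 2 (Fin 2 → ℝ)).symm ![x, y]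

/-- Two sets of points in the plane are congruent if some isometry of `ℝ²`
maps one onto the other. -/
def Cong (S T : Set Plane) : Prop := ∃ f : Plane ≃ᵢ Plane, f '' S = T

/-- The collection of unordered triples of pairwise distinct points of `P`. -/
def triplesOf (P : Set Plane) : Set (Set Plane) :=
  {s | ∃ a b c : Plane, a ∈ P ∧ b ∈ P ∧ c ∈ P ∧ a ≠ b ∧ a ≠ c ∧ b ≠ c ∧ s = {a, b, c}}

/-- The number of congruence classes of unordered triples of pairwise distinct
points of `P` (i.e. the number of distinct triangles spanned by `P`),
as an extended natural number. -/
def numTriangles (P : Set Plane) : ℕ∞ :=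
  ((fun t => {t' ∈ triplesOf P | Cong t t'}) '' triplesOf P).encard

/-- A regular hexagon: six equally spaced points on a circle. -/
def IsRegularHexagon (S : Set Plane) : Prop :=
  ∃ (c : Plane) (r φ : ℝ), 0 < r ∧
    S = Set.range fun k : Fin 6 =>
      c + r • pt (Real.cos (φ + 2 * π * k / 6)) (Real.sin (φ + 2 * π * k / 6))

/-- The two-dimensional cross product of two vectors in the plane. -/
def cross (u v : Plane) : ℝ := u 0 * v 1 - u 1 * v 0

/-- Six pairwise distinct points, listed in cyclic order, form a convex hexagon
(where consecutive vertices are allowed to be collinear): every vertex lies weakly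
on the same side of each directed edge. -/
def IsConvexHexagon (v : Fin 6 → Plane) : Prop :=
  Function.Injective v ∧
    ((∀ i j : Fin 6, 0 ≤ cross (v (i + 1) - v i) (v j - v i)) ∨
      (∀ i j : Fin 6, cross (v (i + 1) - v i) (v j - v i) ≤ 0))

/-- Squared distance. -/
def sqd (P Q : Plane) : ℝ := (P 0 - Q 0) ^ 2 + (P 1 - Q 1) ^ 2

theorem dist_eq_sqd (P Q : Plane) : dist P Q = Real.sqrt (sqd P Q) := by
  rw [EuclideanSpace.dist_eq, Fin.sum_univ_two, Real.dist_eq, Real.dist_eq, sq_abs, sq_abs, sqd]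

theorem sqd_nonneg (P Q : Plane) : 0 ≤ sqd P Q := by unfold sqd; positivity

theorem sqd_comm (P Q : Plane) : sqd P Q = sqd Q P := by unfold sqd; ring

theorem sqd_eq_of_dist {P Q P' Q' : Plane} (h : dist P Q = dist P' Q') : sqd P Q = sqd P' Q' := by
  rw [dist_eq_sqd, dist_eq_sqd] at h
  exact (Real.sqrt_inj (sqd_nonneg _ _) (sqd_nonneg _ _)).1 h

theorem sqd_le_of_dist {P Q P' Q' : Plane} (h : dist P Q ≤ dist P' Q') : sqd P Q ≤ sqd P' Q' := by
  rw [dist_eq_sqd, dist_eq_sqd] at h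
  exact (Real.sqrt_le_sqrt_iff (sqd_nonneg _ _)).1 h

theorem cong_refl (S : Set Plane) : Cong S S := ⟨IsometryEquiv.refl _, Set.image_id S⟩

/-- Congruent triples have the same squared side lengths, up to a permutation. -/
theorem cong_sqd {a b c a' b' c' : Plane} (h : Cong {a, b, c} {a', b', c'})
    (hab : a ≠ b) (hac : a ≠ c) (hbc : b ≠ c) :
    ∃ x y z : ℝ, sqd a b = x ∧ sqd a c = y ∧ sqd b c = z ∧
      ((sqd a' b' = x ∧ sqd a' c' = y ∧ sqd b' c' = z) ∨
       (sqd a' b' = x ∧ sqd a' c' = z ∧ sqd b' c' = y) ∨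
       (sqd a' b' = y ∧ sqd a' c' = x ∧ sqd b' c' = z) ∨
       (sqd a' b' = y ∧ sqd a' c' = z ∧ sqd b' c' = x) ∨
       (sqd a' b' = z ∧ sqd a' c' = x ∧ sqd b' c' = y) ∨
       (sqd a' b' = z ∧ sqd a' c' = y ∧ sqd b' c' = x)) := by
  obtain ⟨f, hf⟩ := h
  refine ⟨_, _, _, rfl, rfl, rfl, ?_⟩
  have e1 : sqd (f a) (f b) = sqd a b := sqd_eq_of_dist (f.dist_eq a b)
  have e2 : sqd (f a) (f c) = sqd a c := sqd_eq_of_dist (f.dist_eq a c)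
  have e3 : sqd (f b) (f c) = sqd b c := sqd_eq_of_dist (f.dist_eq b c)
  have n1 : f a ≠ f b := fun h => hab (f.injective h)
  have n2 : f a ≠ f c := fun h => hac (f.injective h)
  have n3 : f b ≠ f c := fun h => hbc (f.injective h)
  have ha : f a ∈ ({a', b', c'} : Set Plane) := hf ▸ Set.mem_image_of_mem f (by simp)
  have hb : f b ∈ ({a', b', c'} : Set Plane) := hf ▸ Set.mem_image_of_mem f (by simp)
  have hc : f c ∈ ({a', b', c'} : Set Plane) := hf ▸ Set.mem_image_of_mem f (by simp)
  simp only [Set.mem_insert_iff, Set.mem_singleton_iff] at ha hb hc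
  rw [← e1, ← e2, ← e3]
  have s1 := sqd_comm a' b'
  have s2 := sqd_comm a' c'
  have s3 := sqd_comm b' c'
  clear e1 e2 e3 hf
  generalize f a = p at *
  generalize f b = q at *
  generalize f c = r at *
  rcases ha with rfl | rfl | rfl <;> rcases hb with rfl | rfl | rfl <;>
    rcases hc with rfl | rfl | rfl <;> first | exact absurd rfl n1 | exact absurd rfl n2 | exact absurd rfl n3 | simp [*]

theorem not_four {P : Set Plane} (h : numTriangles P ≤ 3) {t1 t2 t3 t4 : Set Plane}
    (h1 : t1 ∈ triplesOf P) (h2 : t2 ∈ triplesOf P) (h3 : t3 ∈ triplesOf P) (h4 : t4 ∈ triplesOf P) :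
    Cong t1 t2 ∨ Cong t1 t3 ∨ Cong t1 t4 ∨ Cong t2 t3 ∨ Cong t2 t4 ∨ Cong t3 t4 := by
  by_contra hn
  push Not at hn
  obtain ⟨n12, n13, n14, n23, n24, n34⟩ := hn
  set g := (fun t => {t' ∈ triplesOf P | Cong t t'}) with hg
  have key : ∀ s t, t ∈ triplesOf P → ¬ Cong s t → g s ≠ g t := by
    intro s t ht hst he
    have : t ∈ g t := ⟨ht, cong_refl t⟩
    rw [← he] at this
    exact hst this.2
  have hsub : ({g t1, g t2, g t3, g t4} : Set (Set (Set Plane))) ⊆ g '' triplesOf P := by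
    rintro x (rfl | rfl | rfl | rfl)
    exacts [⟨_, h1, rfl⟩, ⟨_, h2, rfl⟩, ⟨_, h3, rfl⟩, ⟨_, h4, rfl⟩]
  have hle := (Set.encard_le_encard hsub).trans h
  rw [Set.encard_insert_of_notMem, Set.encard_insert_of_notMem, Set.encard_pair] at hle
  · norm_num at hle
  · exact key _ _ h4 n34
  · simp [key _ _ h3 n23, key _ _ h4 n24]
  · simp [key _ _ h2 n12, key _ _ h3 n13, key _ _ h4 n14]

/-- The point with coordinates `(s, t)` in the frame at `m` with axis `u`
and orientation `ε`. -/
def fr (m0 m1 u0 u1 ε s t : ℝ) : Plane := pt (m0 + s * u0 - ε * t * u1) (m1 + s * u1 + ε * t * u0)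

@[simp] theorem pt_zero (x y : ℝ) : pt x y 0 = x := rfl
@[simp] theorem pt_one (x y : ℝ) : pt x y 1 = y := rfl

theorem plane_ext {P Q : Plane} (h0 : P 0 = Q 0) (h1 : P 1 = Q 1) : P = Q := by
  ext i; fin_cases i
  · exact h0
  · exact h1

theorem exists_fr {m0 m1 u0 u1 ε : ℝ} (hu : 0 < u0 ^ 2 + u1 ^ 2) (hε : ε ^ 2 = 1) (P : Plane) :
    ∃ s t, P = fr m0 m1 u0 u1 ε s t := by
  refine ⟨((P 0 - m0) * u0 + (P 1 - m1) * u1) / (u0 ^ 2 + u1 ^ 2),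
    ε * (u0 * (P 1 - m1) - u1 * (P 0 - m0)) / (u0 ^ 2 + u1 ^ 2), ?_⟩
  apply plane_ext
  · simp only [fr, pt_zero]; field_simp; rw [hε]; ring
  · simp only [fr, pt_one]; field_simp; rw [hε]; ring

theorem sqd_fr {m0 m1 u0 u1 ε : ℝ} (hε : ε ^ 2 = 1) (s t s' t' : ℝ) :
    sqd (fr m0 m1 u0 u1 ε s t) (fr m0 m1 u0 u1 ε s' t') =
      (u0 ^ 2 + u1 ^ 2) * ((s - s') ^ 2 + (t - t') ^ 2) := by
  simp only [sqd, fr, pt_zero, pt_one]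
  linear_combination (u0 ^ 2 + u1 ^ 2) * (t - t') ^ 2 * hε

theorem cross_fr (m0 m1 u0 u1 ε s t s' t' s'' t'' : ℝ) :
    cross (fr m0 m1 u0 u1 ε s t - fr m0 m1 u0 u1 ε s'' t'')
      (fr m0 m1 u0 u1 ε s' t' - fr m0 m1 u0 u1 ε s'' t'') =
      ε * ((u0 ^ 2 + u1 ^ 2) * ((s - s'') * (t' - t'') - (t - t'') * (s' - s''))) := by
  simp only [cross, fr, PiLp.sub_apply, pt_zero, pt_one]
  ring

theorem regular_aux (m0 m1 u0 u1 ε h : ℝ) (hu : 0 < u0 ^ 2 + u1 ^ 2) (hε : ε = 1 ∨ ε = -1)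
    (hh : h = √3 / 2) :
    IsRegularHexagon {fr m0 m1 u0 u1 ε (-1) 0, fr m0 m1 u0 u1 ε (-(1/2)) (-h),
      fr m0 m1 u0 u1 ε (1/2) (-h), fr m0 m1 u0 u1 ε 1 0, fr m0 m1 u0 u1 ε (1/2) h,
      fr m0 m1 u0 u1 ε (-(1/2)) h} := by
  set z : ℂ := ⟨u0, u1⟩ with hz
  have e0 : ‖z‖ * Real.cos z.arg = u0 := Complex.norm_mul_cos_arg z
  have e1 : ‖z‖ * Real.sin z.arg = u1 := Complex.norm_mul_sin_arg z
  have hz0 : z ≠ 0 := by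
    intro h0
    have a0 : u0 = 0 := congrArg Complex.re h0
    have a1 : u1 = 0 := congrArg Complex.im h0
    rw [a0, a1] at hu; norm_num at hu
  have key : ∀ θ s t, Real.cos θ = s → Real.sin θ = t →
      pt m0 m1 + ‖z‖ • pt (Real.cos (z.arg + θ)) (Real.sin (z.arg + θ)) = fr m0 m1 u0 u1 1 s t := by
    rintro θ s t rfl rfl
    apply plane_ext
    · simp only [fr, PiLp.add_apply, PiLp.smul_apply, pt_zero, smul_eq_mul, Real.cos_add, ← e0, ← e1]
      ring
    · simp only [fr, PiLp.add_apply, PiLp.smul_apply, pt_one, smul_eq_mul, Real.sin_add, ← e0, ← e1]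
      ring
  have k0 := key (2 * π * (0 : ℝ) / 6) 1 0 (by simp) (by simp)
  have k1 := key (2 * π * (1 : ℝ) / 6) (1/2) h
    (by rw [show 2 * π * (1 : ℝ) / 6 = π / 3 by ring, Real.cos_pi_div_three])
    (by rw [show 2 * π * (1 : ℝ) / 6 = π / 3 by ring, Real.sin_pi_div_three, hh])
  have k2 := key (2 * π * (2 : ℝ) / 6) (-(1/2)) h
    (by rw [show 2 * π * (2 : ℝ) / 6 = π - π / 3 by ring, Real.cos_pi_sub, Real.cos_pi_div_three])
    (by rw [show 2 * π * (2 : ℝ) / 6 = π - π / 3 by ring, Real.sin_pi_sub, Real.sin_pi_div_three, hh])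
  have k3 := key (2 * π * (3 : ℝ) / 6) (-1) 0
    (by rw [show 2 * π * (3 : ℝ) / 6 = π by ring, Real.cos_pi])
    (by rw [show 2 * π * (3 : ℝ) / 6 = π by ring, Real.sin_pi])
  have k4 := key (2 * π * (4 : ℝ) / 6) (-(1/2)) (-h)
    (by rw [show 2 * π * (4 : ℝ) / 6 = π / 3 + π by ring, Real.cos_add_pi, Real.cos_pi_div_three])
    (by rw [show 2 * π * (4 : ℝ) / 6 = π / 3 + π by ring, Real.sin_add_pi, Real.sin_pi_div_three, hh])
  have k5 := key (2 * π * (5 : ℝ) / 6) (1/2) (-h)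
    (by rw [show 2 * π * (5 : ℝ) / 6 = 2 * π - π / 3 by ring, Real.cos_two_pi_sub, Real.cos_pi_div_three])
    (by rw [show 2 * π * (5 : ℝ) / 6 = 2 * π - π / 3 by ring, Real.sin_two_pi_sub, Real.sin_pi_div_three, hh])
  refine ⟨pt m0 m1, ‖z‖, z.arg, norm_pos_iff.2 hz0, ?_⟩
  have hneg : ∀ s t, fr m0 m1 u0 u1 (-1) s t = fr m0 m1 u0 u1 1 s (-t) := by
    intro s t; simp [fr]
  ext p
  have hr : (p ∈ Set.range fun k : Fin 6 =>
      pt m0 m1 + ‖z‖ • pt (Real.cos (z.arg + 2 * π * k / 6)) (Real.sin (z.arg + 2 * π * k / 6))) ↔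
      (fr m0 m1 u0 u1 1 1 0 = p ∨ fr m0 m1 u0 u1 1 (1/2) h = p ∨ fr m0 m1 u0 u1 1 (-(1/2)) h = p ∨
      fr m0 m1 u0 u1 1 (-1) 0 = p ∨ fr m0 m1 u0 u1 1 (-(1/2)) (-h) = p ∨
      fr m0 m1 u0 u1 1 (1/2) (-h) = p) := by
    rw [← k0, ← k1, ← k2, ← k3, ← k4, ← k5]
    simp only [Set.mem_range]
    constructor
    · rintro ⟨k, hk⟩
      fin_cases k <;> norm_num at hk ⊢ <;> tauto
    · rintro (hk | hk | hk | hk | hk | hk)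
      · exact ⟨0, by simpa using hk⟩
      · exact ⟨1, by simpa using hk⟩
      · exact ⟨2, by simpa using hk⟩
      · exact ⟨3, by simpa using hk⟩
      · exact ⟨4, by simpa using hk⟩
      · exact ⟨5, by simpa using hk⟩
  rw [hr]
  simp only [Set.mem_insert_iff, Set.mem_singleton_iff, @eq_comm _ p]
  rcases hε with rfl | rfl
  · constructor
    · rintro (hk | hk | hk | hk | hk | hk) <;> rw [hk] <;> simp only [true_or, or_true]
    · rintro (hk | hk | hk | hk | hk | hk) <;> rw [hk] <;> simp only [true_or, or_true]
  · simp only [hneg, neg_neg, neg_zero]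
    constructor
    · rintro (hk | hk | hk | hk | hk | hk) <;> rw [hk] <;> simp only [true_or, or_true]
    · rintro (hk | hk | hk | hk | hk | hk) <;> rw [hk] <;> simp only [true_or, or_true]

theorem congABC {R c0 c1 d0 d1 : ℝ} (hR : 0 < R) {A B C D : Plane} (h : Cong {A, B, C} {A, B, D})
    (hab : A ≠ B) (hac : A ≠ C) (hbc : B ≠ C)
    (h1 : sqd A C = R * ((c0 + 1) ^ 2 + c1 ^ 2)) (h2 : sqd B C = R * ((c0 - 1) ^ 2 + c1 ^ 2))
    (h3 : sqd A D = R * ((d0 + 1) ^ 2 + d1 ^ 2)) (h4 : sqd B D = R * ((d0 - 1) ^ 2 + d1 ^ 2)) :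
    (d0 = c0 ∨ d0 = -c0) ∧ (d1 = c1 ∨ d1 = -c1) := by
  have main : (sqd A D = sqd A C ∧ sqd B D = sqd B C) ∨ (sqd A D = sqd B C ∧ sqd B D = sqd A C) := by
    obtain ⟨x, y, z, hx, hy, hz, h⟩ := cong_sqd h hab hac hbc
    rw [hy, hz]; rw [hx] at h
    grind
  rw [h1, h2, h3, h4] at main
  have cancel : ∀ a b : ℝ, R * a = R * b → a = b := fun a b h => mul_left_cancel₀ hR.ne' h
  rcases main with ⟨m1, m2⟩ | ⟨m1, m2⟩
  · have m1 := cancel _ _ m1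
    have m2 := cancel _ _ m2
    have : d0 = c0 := by linarith
    subst this
    exact ⟨Or.inl rfl, sq_eq_sq_iff_eq_or_eq_neg.1 (by linarith)⟩
  · have m1 := cancel _ _ m1
    have m2 := cancel _ _ m2
    have : d0 = -c0 := by linarith
    subst this
    exact ⟨Or.inr rfl, sq_eq_sq_iff_eq_or_eq_neg.1 (by linarith)⟩

/-- Solving for the shape from the convexity data. -/
theorem shape {c0 c1 e0 e1 d0 d1 f0 f1 : ℝ}
    (hE : (e0 = c0 ∨ e0 = -c0) ∧ (e1 = c1 ∨ e1 = -c1))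
    (hD : (d0 = c0 ∨ d0 = -c0) ∧ (d1 = c1 ∨ d1 = -c1))
    (hF : (f0 = c0 ∨ f0 = -c0) ∧ (f1 = c1 ∨ f1 = -c1))
    (nCE : ¬ (c0 = e0 ∧ c1 = e1)) (nDF : ¬ (d0 = f0 ∧ d1 = f1)) (nCD : ¬ (c0 = d0 ∧ c1 = d1))
    (nCF : ¬ (c0 = f0 ∧ c1 = f1))
    (x1 : c1 ≤ 0) (x2 : e1 ≤ 0) (x3 : 0 ≤ d1) (x4 : 0 ≤ f1)
    (x5 : 0 ≤ (c0 + 1) * e1 - c1 * (e0 + 1)) (x6 : 0 ≤ (d0 - 1) * f1 - d1 * (f0 - 1)) :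
    ∃ x h : ℝ, 0 < x ∧ 0 < h ∧ c0 = -x ∧ c1 = -h ∧ e0 = x ∧ e1 = -h ∧ d0 = x ∧ d1 = h ∧
      f0 = -x ∧ f1 = h := by
  have hc1 : c1 < 0 := by
    rcases x1.lt_or_eq with h | h
    · exact h
    · exfalso; subst h; simp at hE hD hF; grind
  have he : e1 = c1 := by rcases hE.2 with h | h <;> linarith
  have hd : d1 = -c1 := by rcases hD.2 with h | h <;> linarith
  have hf : f1 = -c1 := by rcases hF.2 with h | h <;> linarith
  have he0 : e0 = -c0 := by grind
  have hc0 : c0 ≠ 0 := by grind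
  have hf0 : f0 = -d0 := by grind
  subst he hd hf he0 hf0
  have hc : c0 < 0 := by
    have : c0 ≤ 0 := by nlinarith
    exact lt_of_le_of_ne this hc0
  have hd : d0 = -c0 := by
    rcases hD.1 with h | h
    · subst h; nlinarith
    · exact h
  subst hd
  exact ⟨-c0, -e1, by linarith, by linarith, by simp, by simp, by simp, by simp, by simp, by simp, by simp, by simp⟩

theorem solve {A B C D E F : Plane} {R x h : ℝ} (hR : 0 < R) (hx : 0 < x) (hh : 0 < h)
    (nAB : A ≠ B) (nAC : A ≠ C) (nBC : B ≠ C) (nCE : C ≠ E) (nAE : A ≠ E) (nCF : C ≠ F)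
    (nAF : A ≠ F) (nAD : A ≠ D) (nED : E ≠ D)
    (hspan : numTriangles {A, C, E, B, D, F} ≤ 3)
    (dAB : sqd A B = R * 4) (dAC : sqd A C = R * ((1 - x) ^ 2 + h ^ 2))
    (dBC : sqd B C = R * ((1 + x) ^ 2 + h ^ 2)) (dAE : sqd A E = R * ((1 + x) ^ 2 + h ^ 2))
    (dCE : sqd C E = R * (4 * x ^ 2)) (dAF : sqd A F = R * ((1 - x) ^ 2 + h ^ 2))
    (dCF : sqd C F = R * (4 * h ^ 2)) (dAD : sqd A D = R * ((1 + x) ^ 2 + h ^ 2))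
    (dED : sqd E D = R * (4 * h ^ 2)) (hdiam : sqd B C ≤ sqd A B) :
    x = 1 / 2 ∧ h ^ 2 = 3 / 4 := by
  rw [dBC, dAB] at hdiam
  have hq : (1 + x) ^ 2 + h ^ 2 ≤ 4 := le_of_mul_le_mul_left hdiam hR
  have hx1 : x < 1 := by nlinarith
  have cancel : ∀ a b : ℝ, R * a = R * b → a = b := fun a b h => mul_left_cancel₀ hR.ne' h
  have n1 : R * ((1 - x) ^ 2 + h ^ 2) ≠ R * ((1 + x) ^ 2 + h ^ 2) := fun hc => by
    have := cancel _ _ hc; nlinarith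
  have n2 : R * 4 ≠ R * (4 * x ^ 2) := fun hc => by
    have := cancel _ _ hc; nlinarith
  have n3 : R * 4 ≠ R * ((1 - x) ^ 2 + h ^ 2) := fun hc => by
    have := cancel _ _ hc; nlinarith
  have n4 : R * (4 * x ^ 2) ≠ R * ((1 + x) ^ 2 + h ^ 2) := fun hc => by
    have := cancel _ _ hc; nlinarith
  have n5 : ¬ (R * 4 = R * ((1 + x) ^ 2 + h ^ 2) ∧
      R * ((1 - x) ^ 2 + h ^ 2) = R * (4 * h ^ 2)) := fun ⟨h1, h2⟩ => by
    have h1 := cancel _ _ h1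
    have h2 := cancel _ _ h2
    nlinarith
  have main : R * (4 * x ^ 2) = R * ((1 - x) ^ 2 + h ^ 2) ∧
      R * ((1 + x) ^ 2 + h ^ 2) = R * (4 * h ^ 2) := by
    have := not_four hspan (t1 := {A, B, C}) (t2 := {A, C, E}) (t3 := {A, C, F}) (t4 := {A, E, D})
      ⟨A, B, C, by simp, by simp, by simp, nAB, nAC, nBC, rfl⟩
      ⟨A, C, E, by simp, by simp, by simp, nAC, nAE, nCE, rfl⟩
      ⟨A, C, F, by simp, by simp, by simp, nAC, nAF, nCF, rfl⟩
      ⟨A, E, D, by simp, by simp, by simp, nAE, nAD, nED, rfl⟩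
    generalize R * 4 = k1 at *
    generalize R * (4 * x ^ 2) = k2 at *
    generalize R * (4 * h ^ 2) = k3 at *
    generalize R * ((1 - x) ^ 2 + h ^ 2) = k4 at *
    generalize R * ((1 + x) ^ 2 + h ^ 2) = k5 at *
    clear hspan hdiam hq cancel
    rcases this with hc | hc | hc | hc | hc | hc
    · obtain ⟨_, _, _, rfl, rfl, rfl, hc⟩ := cong_sqd hc nAB nAC nBC
      rw [dAB, dAC, dBC, dAE, dCE] at hc
      grind
    · obtain ⟨_, _, _, rfl, rfl, rfl, hc⟩ := cong_sqd hc nAB nAC nBC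
      rw [dAB, dAC, dBC, dAF, dCF] at hc
      grind
    · obtain ⟨_, _, _, rfl, rfl, rfl, hc⟩ := cong_sqd hc nAB nAC nBC
      rw [dAB, dAC, dBC, dAE, dAD, dED] at hc
      grind
    · obtain ⟨_, _, _, rfl, rfl, rfl, hc⟩ := cong_sqd hc nAC nAE nCE
      rw [dAC, dAE, dCE, dAF, dCF] at hc
      grind
    · obtain ⟨_, _, _, rfl, rfl, rfl, hc⟩ := cong_sqd hc nAC nAE nCE
      rw [dAC, dAE, dCE, dAD, dED] at hc
      grind
    · obtain ⟨_, _, _, rfl, rfl, rfl, hc⟩ := cong_sqd hc nAC nAF nCF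
      rw [dAC, dAE, dCF, dAF, dAD, dED] at hc
      grind
  have h1 := cancel _ _ main.1
  have h2 := cancel _ _ main.2
  have hp : (2 * x - 1) * (x + 1) = 0 := by nlinarith
  have hx2 : x = 1 / 2 := by
    rcases mul_eq_zero.1 hp with h | h <;> linarith
  subst hx2
  exact ⟨rfl, by nlinarith⟩

/-- If `ACEBDF` is a convex hexagon (in that cyclic vertex order) spanning at most
three distinct triangles, `AB` realizes the maximal distance between the six points,
and the triples `{A,B,C}`, `{A,B,D}`, `{A,B,E}`, `{A,B,F}` are pairwise congruent,
then `ACEBDF` is a regular hexagon. -/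
theorem hexagon_regularizer (A C E B D F : Plane)
    (hconv : IsConvexHexagon ![A, C, E, B, D, F])
    (hdiam : ∀ p ∈ ({A, C, E, B, D, F} : Set Plane), ∀ q ∈ ({A, C, E, B, D, F} : Set Plane),
      dist p q ≤ dist A B)
    (hC : Cong {A, B, C} {A, B, D})
    (hD : Cong {A, B, C} {A, B, E})
    (hE : Cong {A, B, C} {A, B, F})
    (hspan : numTriangles {A, C, E, B, D, F} ≤ 3) :
    IsRegularHexagon {A, C, E, B, D, F} := by
  obtain ⟨hinj, hcv⟩ := hconv
  have ne : ∀ i j : Fin 6, i ≠ j → ![A, C, E, B, D, F] i ≠ ![A, C, E, B, D, F] j :=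
    fun i j hij h => hij (hinj h)
  have nAB : A ≠ B := ne 0 3 (by decide)
  have nAC : A ≠ C := ne 0 1 (by decide)
  have nBC : B ≠ C := ne 3 1 (by decide)
  have nCE : C ≠ E := ne 1 2 (by decide)
  have nAE : A ≠ E := ne 0 2 (by decide)
  have nCF : C ≠ F := ne 1 5 (by decide)
  have nAF : A ≠ F := ne 0 5 (by decide)
  have nAD : A ≠ D := ne 0 4 (by decide)
  have nED : E ≠ D := ne 2 4 (by decide)
  have nDF : D ≠ F := ne 4 5 (by decide)
  have nCD : C ≠ D := ne 1 4 (by decide)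
  clear ne hinj
  have hdBC : sqd B C ≤ sqd A B := sqd_le_of_dist (hdiam B (by simp) C (by simp))
  clear hdiam
  obtain ⟨ε, hε, hx⟩ : ∃ ε : ℝ, (ε = 1 ∨ ε = -1) ∧ ∀ i j : Fin 6,
      0 ≤ ε * cross (![A, C, E, B, D, F] (i + 1) - ![A, C, E, B, D, F] i)
        (![A, C, E, B, D, F] j - ![A, C, E, B, D, F] i) := by
    rcases hcv with h | h
    · exact ⟨1, Or.inl rfl, fun i j => by linarith [h i j]⟩
    · exact ⟨-1, Or.inr rfl, fun i j => by linarith [h i j]⟩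
  have x1 : 0 ≤ ε * cross (C - A) (B - A) := hx 0 3
  have x2 : 0 ≤ ε * cross (B - E) (A - E) := hx 2 0
  have x3 : 0 ≤ ε * cross (D - B) (A - B) := hx 3 0
  have x4 : 0 ≤ ε * cross (A - F) (B - F) := hx 5 3
  have x5 : 0 ≤ ε * cross (C - A) (E - A) := hx 0 2
  have x6 : 0 ≤ ε * cross (D - B) (F - B) := hx 3 5
  clear hx hcv
  have hε2 : ε ^ 2 = 1 := by rcases hε with rfl | rfl <;> norm_num
  obtain ⟨m0, m1, u0, u1, hu, eA, eB⟩ : ∃ m0 m1 u0 u1 : ℝ, 0 < u0 ^ 2 + u1 ^ 2 ∧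
      A = fr m0 m1 u0 u1 ε (-1) 0 ∧ B = fr m0 m1 u0 u1 ε 1 0 := by
    refine ⟨(A 0 + B 0) / 2, (A 1 + B 1) / 2, (B 0 - A 0) / 2, (B 1 - A 1) / 2, ?_, ?_, ?_⟩
    · by_contra hc
      have h0 : B 0 - A 0 = 0 := by nlinarith [sq_nonneg (B 0 - A 0), sq_nonneg (B 1 - A 1)]
      have h1 : B 1 - A 1 = 0 := by nlinarith [sq_nonneg (B 0 - A 0), sq_nonneg (B 1 - A 1)]
      exact nAB (plane_ext (by linarith) (by linarith))
    · apply plane_ext <;> simp only [fr, pt_zero, pt_one] <;> ring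
    · apply plane_ext <;> simp only [fr, pt_zero, pt_one] <;> ring
  obtain ⟨c0, c1, eC⟩ := exists_fr (m0 := m0) (m1 := m1) hu hε2 C
  obtain ⟨d0, d1, eD⟩ := exists_fr (m0 := m0) (m1 := m1) hu hε2 D
  obtain ⟨e0, e1, eE⟩ := exists_fr (m0 := m0) (m1 := m1) hu hε2 E
  obtain ⟨f0, f1, eF⟩ := exists_fr (m0 := m0) (m1 := m1) hu hε2 F
  have sA : ∀ s t, sqd A (fr m0 m1 u0 u1 ε s t) = (u0 ^ 2 + u1 ^ 2) * ((s + 1) ^ 2 + t ^ 2) := by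
    intro s t; rw [eA, sqd_fr hε2]; ring
  have sB : ∀ s t, sqd B (fr m0 m1 u0 u1 ε s t) = (u0 ^ 2 + u1 ^ 2) * ((s - 1) ^ 2 + t ^ 2) := by
    intro s t; rw [eB, sqd_fr hε2]; ring
  have aC : sqd A C = _ := eC ▸ sA c0 c1
  have bC : sqd B C = _ := eC ▸ sB c0 c1
  have rD := congABC hu hC nAB nAC nBC aC bC (eD ▸ sA d0 d1) (eD ▸ sB d0 d1)
  have rE := congABC hu hD nAB nAC nBC aC bC (eE ▸ sA e0 e1) (eE ▸ sB e0 e1)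
  have rF := congABC hu hE nAB nAC nBC aC bC (eF ▸ sA f0 f1) (eF ▸ sB f0 f1)
  have red : ∀ s t s' t' s'' t'' : ℝ, 0 ≤ ε * cross (fr m0 m1 u0 u1 ε s t - fr m0 m1 u0 u1 ε s'' t'')
      (fr m0 m1 u0 u1 ε s' t' - fr m0 m1 u0 u1 ε s'' t'') →
      0 ≤ (s - s'') * (t' - t'') - (t - t'') * (s' - s'') := by
    intro s t s' t' s'' t'' h
    rw [cross_fr, ← mul_assoc, ← sq, hε2, one_mul] at h
    exact nonneg_of_mul_nonneg_right h hu
  rw [eA, eB, eC] at x1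
  rw [eA, eB, eE] at x2
  rw [eA, eB, eD] at x3
  rw [eA, eB, eF] at x4
  rw [eA, eC, eE] at x5
  rw [eB, eD, eF] at x6
  replace x1 := red _ _ _ _ _ _ x1
  replace x2 := red _ _ _ _ _ _ x2
  replace x3 := red _ _ _ _ _ _ x3
  replace x4 := red _ _ _ _ _ _ x4
  replace x5 := red _ _ _ _ _ _ x5
  replace x6 := red _ _ _ _ _ _ x6
  obtain ⟨x, h, hx, hh, rfl, rfl, rfl, rfl, rfl, rfl, rfl, rfl⟩ := shape rE rD rF
    (fun ⟨p, q⟩ => nCE (by rw [eC, eE, p, q])) (fun ⟨p, q⟩ => nDF (by rw [eD, eF, p, q]))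
    (fun ⟨p, q⟩ => nCD (by rw [eC, eD, p, q])) (fun ⟨p, q⟩ => nCF (by rw [eC, eF, p, q]))
    (by linarith) (by linarith) (by linarith) (by linarith) (by linarith) (by linarith)
  obtain ⟨hx2, hh2⟩ := solve hu hx hh nAB nAC nBC nCE nAE nCF nAF nAD nED hspan
    (by rw [eA, eB, sqd_fr hε2]; ring) (by rw [eA, eC, sqd_fr hε2]; ring)
    (by rw [eB, eC, sqd_fr hε2]; ring) (by rw [eA, eE, sqd_fr hε2]; ring)
    (by rw [eC, eE, sqd_fr hε2]; ring) (by rw [eA, eF, sqd_fr hε2]; ring)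
    (by rw [eC, eF, sqd_fr hε2]; ring) (by rw [eA, eD, sqd_fr hε2]; ring)
    (by rw [eE, eD, sqd_fr hε2]; ring) hdBC
  have hh3 : f1 = √3 / 2 := by
    have h3 : (√3 / 2) ^ 2 = (3 : ℝ) / 4 := by rw [div_pow, Real.sq_sqrt (by norm_num)]; norm_num
    exact (sq_eq_sq₀ hh.le (by positivity)).1 (by rw [h3, hh2])
  have := regular_aux m0 m1 u0 u1 ε f1 hu hε hh3
  rw [hx2] at eC eD eE eF
  rw [eA, eB, eC, eD, eE, eF]
  exact this
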